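/- arXiv:2412.14012 — 7 statements merged into one kernel-verified Lean document; each statement's English description precedes it below -/
import Mathlib

section
/- Let k be a field, let n ≥ 0, let X be a nilpotent endomorphism of V = k^n of Jordan type λ, and let 0 ≤ i ≤ n. Then every i-dimensional linear subspace W of V contains an X-invariant linear subspace U with dim U ≥ Σ_{j=n−i+1}^{n} λ_j (where λ_j = 0 for j beyond the length of λ). -/
/-!
Let `U` be the largest `X`-invariant subspace of `W`, let `c` be the codimension of `W`, and let `f`
be the endomorphism induced by `X` on `V ⧸ U`. The dimension of `V ⧸ U` is the sum over `m` of the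
number of Jordan blocks of `f` of size greater than `m`. That number is at most `c`, since the
kernel of `f` meets `W ⧸ U` trivially, and at most the number of Jordan blocks of `X` of size
greater than `m`, since `f` is a quotient of `X`. As `l` is antitone, both bounds together give the
number of `j < c` with `m < l j`, so that `dim (V ⧸ U) ≤ ∑ j < c, l j`.
-/

open Finset

/-- `l` is a partition of `n`: weakly decreasing, parts beyond position `n` are zero,
and the parts sum to `n`. Parts are `0`-indexed: `λ_j = l (j - 1)` for `j ≥ 1`. -/
def IsPartition (n : ℕ) (l : ℕ → ℕ) : Prop :=
  Antitone l ∧ (∀ j, n ≤ j → l j = 0) ∧ ∑ j ∈ Finset.range n, l j = n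

section Counting

theorem sum_tsub_eq_sum_tsub_succ_add_card {ι : Type*} (s : Finset ι) (l : ι → ℕ) (m : ℕ) :
    ∑ j ∈ s, (l j - m) = ∑ j ∈ s, (l j - (m + 1)) + #{j ∈ s | m < l j} := by
  rw [card_filter, ← sum_add_distrib]
  refine sum_congr rfl fun j _ => ?_
  split_ifs <;> omega

theorem min_card_filter_range_le {p : ℕ → Prop} [DecidablePred p] (hp : Antitone p) (c n : ℕ) :
    min c #{j ∈ range n | p j} ≤ #{j ∈ range c | p j} := by
  by_cases hc : p c
  · have hall : ∀ j ∈ range c, p j := fun j hj => hp (mem_range.1 hj).le hc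
    rw [filter_true_of_mem hall, card_range]
    exact min_le_left _ _
  · have hlt : ∀ j, p j → j < c := fun j hj => not_le.1 fun hcj => hc (hp hcj hj)
    refine (min_le_right _ _).trans (card_le_card fun j hj => ?_)
    rw [mem_filter] at hj ⊢
    exact ⟨mem_range.2 (hlt j hj.2), hj.2⟩

theorem sum_range_card_filter_lt_le {ι : Type*} (s : Finset ι) (l : ι → ℕ) (M : ℕ) :
    ∑ m ∈ range M, #{j ∈ s | m < l j} ≤ ∑ j ∈ s, l j :=
  calc ∑ m ∈ range M, #{j ∈ s | m < l j}
      = ∑ j ∈ s, #{m ∈ range M | m < l j} :=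
        sum_card_bipartiteAbove_eq_sum_card_bipartiteBelow fun m j => m < l j
    _ ≤ ∑ j ∈ s, #(range (l j)) :=
        sum_le_sum fun _ _ => card_le_card fun _ hm => mem_range.2 (mem_filter.1 hm).2
    _ = ∑ j ∈ s, l j := by simp only [card_range]

end Counting

section InvariantCore

variable {R M : Type*} [Semiring R] [AddCommMonoid M] [Module R M]

/-- The largest `X`-invariant submodule of `W`, encoded as the set of vectors whose whole forward
`X`-orbit lies in `W`. -/
def invariantCore (X : Module.End R M) (W : Submodule R M) : Submodule R M :=
  ⨅ m : ℕ, W.comap (X ^ m)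

variable {X : Module.End R M} {W : Submodule R M}

theorem mem_invariantCore {x : M} : x ∈ invariantCore X W ↔ ∀ m : ℕ, (X ^ m) x ∈ W := by
  simp only [invariantCore, Submodule.mem_iInf, Submodule.mem_comap]

theorem mem_invariantCore_iff_mem_and_apply_mem {x : M} :
    x ∈ invariantCore X W ↔ x ∈ W ∧ X x ∈ invariantCore X W := by
  simp only [mem_invariantCore, ← Module.End.mul_apply, ← pow_succ]
  exact Nat.and_forall_add_one.symm

variable (X W)

theorem invariantCore_le : invariantCore X W ≤ W :=
  fun _ hx => (mem_invariantCore_iff_mem_and_apply_mem.1 hx).1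

theorem invariantCore_le_comap : invariantCore X W ≤ (invariantCore X W).comap X :=
  fun _ hx => (mem_invariantCore_iff_mem_and_apply_mem.1 hx).2

end InvariantCore

section Semiconj

variable {R M N : Type*} [Semiring R] [AddCommMonoid M] [Module R M]
  [AddCommMonoid N] [Module R N]

theorem range_pow_eq_map_range_pow {X : Module.End R M} {f : Module.End R N} {p : M →ₗ[R] N}
    (hp : Function.Surjective p) (hfp : f ∘ₗ p = p ∘ₗ X) (m : ℕ) :
    LinearMap.range (f ^ m) = (LinearMap.range (X ^ m)).map p := by
  rw [← LinearMap.range_comp, ← Module.End.commute_pow_left_of_commute hfp,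
    LinearMap.range_comp_of_range_eq_top _ (LinearMap.range_eq_top.2 hp)]

end Semiconj

section LinearAlgebra

variable {k V N : Type*} [DivisionRing k] [AddCommGroup V] [Module k V]
  [AddCommGroup N] [Module k N]

theorem finrank_map_add_finrank_inf_ker (g : V →ₗ[k] N) (A : Submodule k V)
    [FiniteDimensional k A] :
    Module.finrank k (A.map g) + Module.finrank k (A ⊓ LinearMap.ker g : Submodule k V) =
      Module.finrank k A := by
  rw [← LinearMap.finrank_range_add_finrank_ker (g.domRestrict A), LinearMap.range_domRestrict,
    LinearMap.ker_domRestrict, ← Submodule.map_comap_subtype, Submodule.finrank_map_subtype_eq]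

theorem finrank_map_add_finrank_le (g : V →ₗ[k] N) {A B : Submodule k V}
    [FiniteDimensional k A] (hBA : B ≤ A) :
    Module.finrank k (A.map g) + Module.finrank k B ≤
      Module.finrank k (B.map g) + Module.finrank k A := by
  have : FiniteDimensional k B := Submodule.finiteDimensional_of_le hBA
  have hker := Submodule.finrank_mono (inf_le_inf_right (LinearMap.ker g) hBA)
  have hA := finrank_map_add_finrank_inf_ker g A
  have hB := finrank_map_add_finrank_inf_ker g B
  omega

theorem finrank_range_pow_zero (X : Module.End k V) :
    Module.finrank k (LinearMap.range (X ^ 0)) = Module.finrank k V := by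
  rw [pow_zero, Module.End.one_eq_id, LinearMap.range_id, finrank_top]

theorem finrank_ker_mapQ_invariantCore_le (X : Module.End k V) (W : Submodule k V)
    [FiniteDimensional k (V ⧸ W)] :
    Module.finrank k (LinearMap.ker ((invariantCore X W).mapQ (invariantCore X W) X
      (invariantCore_le_comap X W))) ≤ Module.finrank k (V ⧸ W) := by
  set U := invariantCore X W
  set K := LinearMap.ker (U.mapQ U X (invariantCore_le_comap X W))
  let g : (V ⧸ U) →ₗ[k] (V ⧸ W) := Submodule.factor (invariantCore_le X W)
  have hdisj : Disjoint K (LinearMap.ker g) := by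
    refine LinearMap.disjoint_ker.2 fun y hyK hyg => ?_
    obtain ⟨x, rfl⟩ := Submodule.Quotient.mk_surjective U y
    have hXx : X x ∈ U := (Submodule.Quotient.mk_eq_zero U).1 hyK
    have hx : x ∈ W := (Submodule.Quotient.mk_eq_zero W).1 hyg
    exact (Submodule.Quotient.mk_eq_zero U).2
      (mem_invariantCore_iff_mem_and_apply_mem.2 ⟨hx, hXx⟩)
  exact LinearMap.finrank_le_finrank_of_injective (LinearMap.injective_domRestrict_iff.2 hdisj)

/-- The number of Jordan blocks of size greater than `m` of a nilpotent endomorphism `X`: each such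
block contributes exactly one dimension to `ker X ⊓ range (X ^ m)`. -/
noncomputable def numBlocksGT (X : Module.End k V) (m : ℕ) : ℕ :=
  Module.finrank k (LinearMap.range (X ^ m) ⊓ LinearMap.ker X : Submodule k V)

theorem finrank_range_pow_succ_add_numBlocksGT [FiniteDimensional k V] (X : Module.End k V)
    (m : ℕ) :
    Module.finrank k (LinearMap.range (X ^ (m + 1))) + numBlocksGT X m =
      Module.finrank k (LinearMap.range (X ^ m)) := by
  rw [pow_succ', Module.End.mul_eq_comp, LinearMap.range_comp]
  exact finrank_map_add_finrank_inf_ker X _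

theorem finrank_range_pow_add_sum_numBlocksGT [FiniteDimensional k V] (X : Module.End k V)
    (M : ℕ) :
    Module.finrank k (LinearMap.range (X ^ M)) + ∑ m ∈ range M, numBlocksGT X m =
      Module.finrank k V := by
  induction M with
  | zero => rw [sum_range_zero, add_zero, finrank_range_pow_zero]
  | succ M ih =>
    rw [← ih, sum_range_succ, ← finrank_range_pow_succ_add_numBlocksGT X M]
    ring

theorem numBlocksGT_le_finrank_ker (X : Module.End k V) [FiniteDimensional k (LinearMap.ker X)]
    (m : ℕ) :
    numBlocksGT X m ≤ Module.finrank k (LinearMap.ker X) :=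
  Submodule.finrank_mono inf_le_right

theorem numBlocksGT_le_of_surjective [FiniteDimensional k V] {X : Module.End k V}
    {f : Module.End k N} {p : V →ₗ[k] N} (hp : Function.Surjective p) (hfp : f ∘ₗ p = p ∘ₗ X)
    (m : ℕ) : numBlocksGT f m ≤ numBlocksGT X m := by
  have : FiniteDimensional k N := Module.Finite.of_surjective p hp
  have hle : LinearMap.range (X ^ (m + 1)) ≤ LinearMap.range (X ^ m) :=
    LinearMap.range_comp_le_range X (X ^ m)
  have hcodim := finrank_map_add_finrank_le p hle
  rw [← range_pow_eq_map_range_pow hp hfp, ← range_pow_eq_map_range_pow hp hfp] at hcodim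
  have hX := finrank_range_pow_succ_add_numBlocksGT X m
  have hf := finrank_range_pow_succ_add_numBlocksGT f m
  omega

variable [FiniteDimensional k V] {X : Module.End k V}

theorem numBlocksGT_eq_card_filter {ι : Type*} {s : Finset ι} {l : ι → ℕ}
    (hX : ∀ m : ℕ, Module.finrank k (LinearMap.range (X ^ m)) = ∑ j ∈ s, (l j - m)) (m : ℕ) :
    numBlocksGT X m = #{j ∈ s | m < l j} := by
  have h := finrank_range_pow_succ_add_numBlocksGT X m
  rw [hX, hX, sum_tsub_eq_sum_tsub_succ_add_card s l m] at h
  exact Nat.add_left_cancel h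

theorem finrank_quotient_invariantCore_le {n : ℕ} {l : ℕ → ℕ} (hl : Antitone l)
    (hX : ∀ m : ℕ, Module.finrank k (LinearMap.range (X ^ m)) = ∑ j ∈ range n, (l j - m))
    (W : Submodule k V) :
    Module.finrank k (V ⧸ invariantCore X W) ≤ ∑ j ∈ range (Module.finrank k (V ⧸ W)), l j := by
  set U := invariantCore X W
  set c := Module.finrank k (V ⧸ W)
  let f : Module.End k (V ⧸ U) := U.mapQ U X (invariantCore_le_comap X W)
  have hcomm : f ∘ₗ U.mkQ = U.mkQ ∘ₗ X := U.mapQ_mkQ U X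
  have hrange : Module.finrank k (LinearMap.range (f ^ l 0)) = 0 := by
    have hX0 : LinearMap.range (X ^ l 0) = ⊥ := by
      rw [← Submodule.finrank_eq_zero, hX]
      exact sum_eq_zero fun j _ => Nat.sub_eq_zero_of_le (hl j.zero_le)
    rw [range_pow_eq_map_range_pow U.mkQ_surjective hcomm, hX0, Submodule.map_bot, finrank_bot]
  have hblocks (m : ℕ) : numBlocksGT f m ≤ #{j ∈ range c | m < l j} :=
    calc numBlocksGT f m
        ≤ min c #{j ∈ range n | m < l j} :=
          le_min ((numBlocksGT_le_finrank_ker f m).trans (finrank_ker_mapQ_invariantCore_le X W))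
            ((numBlocksGT_le_of_surjective U.mkQ_surjective hcomm m).trans_eq
              (numBlocksGT_eq_card_filter hX m))
      _ ≤ #{j ∈ range c | m < l j} :=
          min_card_filter_range_le (fun _ _ hij hj => lt_of_lt_of_le hj (hl hij)) c n
  calc Module.finrank k (V ⧸ U)
      = ∑ m ∈ range (l 0), numBlocksGT f m := by
        rw [← finrank_range_pow_add_sum_numBlocksGT f (l 0), hrange, zero_add]
    _ ≤ ∑ m ∈ range (l 0), #{j ∈ range c | m < l j} := sum_le_sum fun m _ => hblocks m
    _ ≤ ∑ j ∈ range c, l j := sum_range_card_filter_lt_le (range c) l (l 0)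

theorem every_subspace_contains_invariant_subspace_general {n : ℕ} {l : ℕ → ℕ} (hl : Antitone l)
    (hX : ∀ m : ℕ, Module.finrank k (LinearMap.range (X ^ m)) = ∑ j ∈ range n, (l j - m))
    (W : Submodule k V) :
    ∃ U : Submodule k V, U ≤ W ∧ (∀ x ∈ U, X x ∈ U) ∧
      ∑ j ∈ Ico (Module.finrank k (V ⧸ W)) n, l j ≤ Module.finrank k U := by
  refine ⟨invariantCore X W, invariantCore_le X W, invariantCore_le_comap X W, ?_⟩
  rcases le_total n (Module.finrank k (V ⧸ W)) with hn | hn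
  · simp only [Ico_eq_empty_of_le hn, sum_empty, zero_le]
  · have hV : Module.finrank k V = ∑ j ∈ range n, l j := by
      simpa only [finrank_range_pow_zero, Nat.sub_zero] using hX 0
    have hquot := finrank_quotient_invariantCore_le hl hX W
    have hadd := Submodule.finrank_quotient_add_finrank (invariantCore X W)
    have hsplit := sum_range_add_sum_Ico l hn
    omega

end LinearAlgebra

/-- A nilpotent endomorphism `X` of `V = k^n` of Jordan type `λ` (i.e.
`rank (X ^ m) = ∑_j max (λ_j - m) 0` for all `m ≥ 0`):
every `i`-dimensional subspace `W` of `V` contains an `X`-invariant subspace `U`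
with `dim U ≥ ∑_{j = n - i + 1}^{n} λ_j`. -/
theorem every_subspace_contains_invariant_subspace
    {k : Type*} [Field k] (n : ℕ) (l : ℕ → ℕ) (hl : IsPartition n l)
    (X : (Fin n → k) →ₗ[k] (Fin n → k)) (hnil : IsNilpotent X)
    (hX : ∀ m : ℕ, Module.finrank k (LinearMap.range (X ^ m)) =
      ∑ j ∈ Finset.range n, (l j - m))
    (i : ℕ) (hin : i ≤ n) (W : Submodule k (Fin n → k))
    (hW : Module.finrank k W = i) :
    ∃ U : Submodule k (Fin n → k), U ≤ W ∧ (∀ x ∈ U, X x ∈ U) ∧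
      ∑ j ∈ Finset.Ico (n - i) n, l j ≤ Module.finrank k U := by
  have hcodim : Module.finrank k ((Fin n → k) ⧸ W) = n - i := by
    rw [Submodule.finrank_quotient, Module.finrank_fin_fun, hW]
  exact hcodim ▸ every_subspace_contains_invariant_subspace_general hl.1 hX W
end

section
/- Let k be a field, let X be a nilpotent n×n matrix over k of Jordan type λ, and let 1 ≤ i ≤ n−1. Then the stable rank of the leading principal submatrix X_{≤i,≤i} is at most d_{λ,i}, i.e. rank((X_{≤i,≤i})^i) ≤ d_{λ,i}. -/
/-- `d_{λ,i} = i - ∑_{j = n - i + 1}^{n} λ_j` (with `0`-indexed parts `λ_j = l (j-1)`). -/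
def dPart (n : ℕ) (l : ℕ → ℕ) (i : ℕ) : ℕ :=
  i - ∑ j ∈ Finset.Ico (n - i) n, l j

/-- An `n × n` matrix `X` has Jordan type `λ` iff
`rank (X ^ m) = ∑_j max (λ_j - m) 0` for all `m ≥ 0`. -/
def HasJordanType {k : Type*} [Field k] {n : ℕ} (X : Matrix (Fin n) (Fin n) k)
    (l : ℕ → ℕ) : Prop :=
  ∀ m : ℕ, (X ^ m).rank = ∑ j ∈ Finset.range n, (l j - m)

open Module Function

section TruncatedOrbit

/-- The `f`-stable submodule `C + f C + ⋯ + f^{q-1} C + f^q M`, encoded by the recursion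
`N_0 = M`, `N_{q+1} = C + f N_q`. -/
def truncatedOrbit {R M : Type*} [Semiring R] [AddCommMonoid M] [Module R M] (f : End R M)
    (C : Submodule R M) : ℕ → Submodule R M
  | 0 => ⊤
  | q + 1 => C ⊔ (truncatedOrbit f C q).map f

variable {R M : Type*} [Semiring R] [AddCommMonoid M] [Module R M] (f : End R M)
  (C : Submodule R M)

lemma le_truncatedOrbit : ∀ q, C ≤ truncatedOrbit f C q
  | 0 => le_top
  | _ + 1 => le_sup_left

lemma truncatedOrbit_antitone : Antitone (truncatedOrbit f C) := by
  refine antitone_nat_of_succ_le fun q => ?_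
  induction q with
  | zero => exact le_top
  | succ q ih => exact sup_le_sup_left (Submodule.map_mono ih) C

lemma truncatedOrbit_le_comap (q : ℕ) :
    truncatedOrbit f C q ≤ (truncatedOrbit f C q).comap f :=
  Submodule.map_le_iff_le_comap.1 <|
    le_sup_right.trans (truncatedOrbit_antitone f C q.le_succ)

end TruncatedOrbit

section Compression

variable {R M U : Type*} [Ring R] [AddCommGroup M] [Module R M] [AddCommGroup U] [Module R U]
  {f : End R M} {π : M →ₗ[R] U} {ι : U →ₗ[R] M} {N : Submodule R M}

lemma mkQ_comp_compression_pow (hπι : LeftInverse π ι) (hC : LinearMap.ker π ≤ N)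
    (hN : N ≤ N.comap f) (m : ℕ) :
    (N.mkQ ∘ₗ ι) ∘ₗ ((π ∘ₗ f ∘ₗ ι) ^ m : End R U)
      = (N.mapQ N f hN ^ m : End R (M ⧸ N)) ∘ₗ (N.mkQ ∘ₗ ι) := by
  refine (End.commute_pow_left_of_commute ?_ m).symm
  ext u
  have hmem : f (ι u) - ι (π (f (ι u))) ∈ N := hC (by simp [hπι _])
  exact (Submodule.Quotient.eq N).2 hmem

lemma range_compression_pow_le_map (hπι : LeftInverse π ι) (hC : LinearMap.ker π ≤ N)
    (hN : N ≤ N.comap f) {m : ℕ} (hm : LinearMap.range (f ^ m) ≤ N) :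
    LinearMap.range ((π ∘ₗ f ∘ₗ ι : End R U) ^ m) ≤ N.map π := by
  rintro _ ⟨u, rfl⟩
  have hcomm := LinearMap.congr_fun (mkQ_comp_compression_pow hπι hC hN m) u
  rw [← N.mapQ_pow] at hcomm
  have hzero : N.mkQ ((f ^ m) (ι u)) = 0 := (Submodule.Quotient.mk_eq_zero N).2 (hm ⟨ι u, rfl⟩)
  exact ⟨_, (Submodule.Quotient.mk_eq_zero N).1 (hcomm.trans hzero), hπι _⟩

end Compression

section Finrank

variable {K V U : Type*} [DivisionRing K] [AddCommGroup V] [Module K V] [FiniteDimensional K V]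
  [AddCommGroup U] [Module K U]

lemma finrank_map_add_finrank_ker_of_ker_le {π : V →ₗ[K] U} {N : Submodule K V}
    (hC : LinearMap.ker π ≤ N) :
    finrank K (N.map π) + finrank K (LinearMap.ker π) = finrank K N := by
  rw [← (π.domRestrict N).finrank_range_add_finrank_ker, LinearMap.range_domRestrict,
    LinearMap.ker_domRestrict]
  exact congrArg _ (Submodule.submoduleOfEquivOfLe hC).finrank_eq.symm

lemma finrank_range_pow_eq_of_finrank_le (g : End K V) {m : ℕ} (hm : finrank K V ≤ m) :
    finrank K (LinearMap.range (g ^ m)) = finrank K (LinearMap.range (g ^ finrank K V)) := by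
  have hrank := (g ^ m).finrank_range_add_finrank_ker.trans
    (g ^ finrank K V).finrank_range_add_finrank_ker.symm
  rw [End.ker_pow_eq_ker_pow_finrank_of_le hm] at hrank
  exact Nat.add_right_cancel hrank

/-- The auxiliary power `f ^ r` absorbs the `f` of `N_{q+1} = C + f N_q` in the induction on `q`. -/
lemma finrank_map_pow_truncatedOrbit_le (f : End K V) (C : Submodule K V) (q r : ℕ) :
    finrank K ((truncatedOrbit f C q).map (f ^ r))
      ≤ q * finrank K C + finrank K (LinearMap.range (f ^ (r + q))) := by
  induction q generalizing r with
  | zero =>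
    rw [zero_mul, zero_add, add_zero, truncatedOrbit, LinearMap.range_eq_map]
  | succ q ih =>
    calc finrank K ((C ⊔ (truncatedOrbit f C q).map f).map (f ^ r))
        = finrank K (C.map (f ^ r) ⊔ (truncatedOrbit f C q).map (f ^ (r + 1)) :
            Submodule K V) := by
          rw [Submodule.map_sup, ← Submodule.map_comp, ← End.mul_eq_comp, ← pow_succ]
      _ ≤ finrank K (C.map (f ^ r)) + finrank K ((truncatedOrbit f C q).map (f ^ (r + 1))) :=
          Submodule.finrank_add_le_finrank_add_finrank _ _
      _ ≤ finrank K C + (q * finrank K C + finrank K (LinearMap.range (f ^ (r + 1 + q)))) :=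
          Nat.add_le_add (Submodule.finrank_map_le _ _) (ih (r + 1))
      _ = (q + 1) * finrank K C + finrank K (LinearMap.range (f ^ (r + (q + 1)))) := by
          rw [add_right_comm r 1 q, add_assoc r q 1]
          ring

lemma finrank_truncatedOrbit_le (f : End K V) (C : Submodule K V) (q : ℕ) :
    finrank K (truncatedOrbit f C q)
      ≤ q * finrank K C + finrank K (LinearMap.range (f ^ q)) := by
  have hmap := finrank_map_pow_truncatedOrbit_le f C q 0
  rwa [pow_zero, End.one_eq_id, Submodule.map_id, zero_add] at hmap

lemma finrank_range_compression_pow_add_le [FiniteDimensional K U] {f : End K V}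
    (hf : IsNilpotent f) {π : V →ₗ[K] U} {ι : U →ₗ[K] V} (hπι : LeftInverse π ι) (q : ℕ) :
    finrank K (LinearMap.range ((π ∘ₗ f ∘ₗ ι : End K U) ^ finrank K U))
        + finrank K (LinearMap.ker π)
      ≤ q * finrank K (LinearMap.ker π) + finrank K (LinearMap.range (f ^ q)) := by
  obtain ⟨m, hm⟩ := hf
  set N := truncatedOrbit f (LinearMap.ker π) q
  have hC : LinearMap.ker π ≤ N := le_truncatedOrbit f _ q
  have hM : LinearMap.range (f ^ (finrank K U + m)) ≤ N := by
    rw [pow_add, hm, mul_zero, LinearMap.range_zero]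
    exact bot_le
  have hrange := range_compression_pow_le_map hπι hC (truncatedOrbit_le_comap f _ q) hM
  calc _ ≤ finrank K (N.map π) + finrank K (LinearMap.ker π) := by
        rw [← finrank_range_pow_eq_of_finrank_le _ (Nat.le_add_right _ m)]
        exact Nat.add_le_add_right (Submodule.finrank_mono hrange) _
    _ = finrank K N := finrank_map_add_finrank_ker_of_ker_le hC
    _ ≤ _ := finrank_truncatedOrbit_le f _ q

end Finrank

section Submatrix

variable {m n : Type*} [Fintype m] [Fintype n]

lemma mulVecLin_submatrix_of_injective {R l o : Type*} [CommSemiring R] (X : Matrix l m R)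
    (r : o → l) {e : n → m} (he : Injective e) :
    (X.submatrix r e).mulVecLin
      = LinearMap.funLeft R R r ∘ₗ X.mulVecLin ∘ₗ ExtendByZero.linearMap R e := by
  ext1 v
  funext i
  refine Fintype.sum_of_injective e he _ _ ?_ ?_
  · intro j hj
    exact mul_eq_zero_of_right _ (extend_apply' v (0 : m → R) j hj)
  · intro j
    exact congrArg (X (r i) (e j) * ·) (he.extend_apply v (0 : m → R) j).symm

lemma finrank_ker_funLeft_add_card (K : Type*) [DivisionRing K] {e : n → m} (he : Injective e) :
    finrank K (LinearMap.ker (LinearMap.funLeft K K e)) + Fintype.card n = Fintype.card m := by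
  have hrank := (LinearMap.funLeft K K e).finrank_range_add_finrank_ker
  rwa [LinearMap.range_eq_top.2 (LinearMap.funLeft_surjective_of_injective K K e he), finrank_top,
    finrank_fintype_fun_eq_card, finrank_fintype_fun_eq_card, add_comm] at hrank

lemma rank_submatrix_pow_card_add_le {k : Type*} [Field k] [DecidableEq m] [DecidableEq n]
    {X : Matrix m m k} (hX : IsNilpotent X) {e : n → m} (he : Injective e) (q : ℕ) :
    ((X.submatrix e e) ^ Fintype.card n).rank + (Fintype.card m - Fintype.card n)
      ≤ q * (Fintype.card m - Fintype.card n) + (X ^ q).rank := by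
  have hinv : LeftInverse (LinearMap.funLeft k k e) (ExtendByZero.linearMap k e) :=
    fun v => funext fun j => he.extend_apply v 0 j
  have hbound := finrank_range_compression_pow_add_le
    (Matrix.isNilpotent_toLin'_iff X |>.2 hX) hinv q
  have hcompress : LinearMap.funLeft k k e ∘ₗ Matrix.toLin' X ∘ₗ ExtendByZero.linearMap k e
      = Matrix.toLin' (X.submatrix e e) := (mulVecLin_submatrix_of_injective X e he).symm
  rw [hcompress, finrank_fintype_fun_eq_card, ← Matrix.toLin'_pow, ← Matrix.toLin'_pow,
    Nat.eq_sub_of_add_eq (finrank_ker_funLeft_add_card k he)] at hbound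
  exact hbound

end Submatrix

lemma mul_add_sum_range_tsub_of_antitone {l : ℕ → ℕ} (hl : Antitone l) {n p : ℕ} (hp : p ≤ n) :
    l p * p + ∑ j ∈ Finset.range n, (l j - l p) = ∑ j ∈ Finset.range p, l j := by
  have htail : ∑ j ∈ Finset.Ico p n, (l j - l p) = 0 :=
    Finset.sum_eq_zero fun _ hj => Nat.sub_eq_zero_of_le (hl (Finset.mem_Ico.1 hj).1)
  have hconst : l p * p = ∑ _j ∈ Finset.range p, l p := by simp [mul_comm]
  rw [← Finset.sum_range_add_sum_Ico _ hp, htail, add_zero, hconst, ← Finset.sum_add_distrib]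
  exact Finset.sum_congr rfl fun _ hj => Nat.add_sub_cancel' (hl (Finset.mem_range.1 hj).le)

theorem stable_rank_le_dPart_general {k κ : Type*} [Field k] [Fintype κ] [DecidableEq κ] {n : ℕ}
    {l : ℕ → ℕ} (hl : IsPartition n l) {X : Matrix (Fin n) (Fin n) k} (hnil : IsNilpotent X)
    (hX : HasJordanType X l) {e : κ → Fin n} (he : Injective e) :
    ((X.submatrix e e) ^ Fintype.card κ).rank ≤ dPart n l (Fintype.card κ) := by
  obtain ⟨hanti, -, hsum⟩ := hl
  set i := Fintype.card κ
  have hin : i ≤ n := by simpa using Fintype.card_le_of_injective e he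
  have hrank : ((X.submatrix e e) ^ i).rank + (n - i) ≤ ∑ j ∈ Finset.range (n - i), l j := by
    have hbound := rank_submatrix_pow_card_add_le hnil he (l (n - i))
    rwa [Fintype.card_fin, hX, mul_add_sum_range_tsub_of_antitone hanti (Nat.sub_le n i)] at hbound
  have hsplit := Finset.sum_range_add_sum_Ico l (Nat.sub_le n i)
  unfold dPart
  omega

/-- If `X` is a nilpotent `n × n` matrix of Jordan type `λ` and `1 ≤ i ≤ n - 1`, then the
stable rank of the leading principal `i × i` submatrix `X_{≤i,≤i}` is at most `d_{λ,i}`. -/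
theorem stable_rank_le_dPart {k : Type*} [Field k] (n : ℕ) (l : ℕ → ℕ)
    (hl : IsPartition n l) (X : Matrix (Fin n) (Fin n) k) (hnil : IsNilpotent X)
    (hX : HasJordanType X l) (i : ℕ) (hi1 : 1 ≤ i) (hin : i < n) :
    ((X.submatrix (Fin.castLE hin.le) (Fin.castLE hin.le)) ^ i).rank ≤ dPart n l i := by
  simpa only [Fintype.card_fin] using
    stable_rank_le_dPart_general hl hnil hX (Fin.castLE_injective hin.le)
end

section
/- Let k be a field, let X be a nilpotent n×n matrix over k, let 1 ≤ i ≤ n, and let U be an X-invariant linear subspace of k^n contained in the coordinate subspace spanned by the first i standard basis vectors, with dim U = u. Then rank((X_{≤i,≤i})^i) ≤ i − u. -/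
/-!
Restricting vectors of `U` to the coordinates of the block `Y` of `X` loses nothing, because they
vanish elsewhere, and for the same reason it intertwines `X` on `U` with `Y`. So `Y` acts
nilpotently on a copy of `U`. Kernels of powers of `Y` stabilise at the exponent equal to the size
of `Y`, so this copy lies in the kernel of that power, and rank-nullity gives the bound.
-/

open Matrix Module

section LinearMap

variable {K V W : Type*} [DivisionRing K] [AddCommGroup V] [Module K V] [AddCommGroup W]
  [Module K W] [FiniteDimensional K W] {f : End K V} {g : End K W} {s : V →ₗ[K] W}

lemma range_le_ker_pow_finrank_of_comp_eq (hs : g ∘ₗ s = s ∘ₗ f)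
    (hf : ∀ v, ∃ N, (f ^ N) v = 0) :
    LinearMap.range s ≤ LinearMap.ker (g ^ finrank K W) := by
  rintro _ ⟨v, rfl⟩
  obtain ⟨N, hN⟩ := hf v
  refine End.ker_pow_le_ker_pow_finrank g N (LinearMap.mem_ker.2 ?_)
  calc (g ^ N) (s v) = s ((f ^ N) v) :=
        LinearMap.congr_fun (End.commute_pow_left_of_commute hs N) v
    _ = 0 := by rw [hN, map_zero]

lemma finrank_range_pow_finrank_add_finrank_le (hs : g ∘ₗ s = s ∘ₗ f)
    (hs_inj : Function.Injective s) (hf : ∀ v, ∃ N, (f ^ N) v = 0) :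
    finrank K (LinearMap.range (g ^ finrank K W)) + finrank K V ≤ finrank K W :=
  calc finrank K (LinearMap.range (g ^ finrank K W)) + finrank K V
      = finrank K (LinearMap.range (g ^ finrank K W)) + finrank K (LinearMap.range s) := by
        rw [LinearMap.finrank_range_of_inj hs_inj]
    _ ≤ finrank K (LinearMap.range (g ^ finrank K W)) +
          finrank K (LinearMap.ker (g ^ finrank K W)) := by
        gcongr
        exact Submodule.finrank_mono (range_le_ker_pow_finrank_of_comp_eq hs hf)
    _ = finrank K W := LinearMap.finrank_range_add_finrank_ker _

end LinearMap

lemma injective_domRestrict_funLeft {R M m ι : Type*} [Semiring R] [AddCommMonoid M]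
    [Module R M] {e : ι → m} {U : Submodule R (m → M)}
    (hU : ∀ v ∈ U, Function.support v ⊆ Set.range e) :
    Function.Injective ((LinearMap.funLeft R M e).domRestrict U) := by
  rintro ⟨v, hv⟩ ⟨w, hw⟩ hvw
  ext j
  by_cases hj : j ∈ Set.range e
  · obtain ⟨a, rfl⟩ := hj
    exact congrFun hvw a
  · have vanishes {x : m → M} (hx : x ∈ U) : x j = 0 :=
      Function.notMem_support.1 (Set.notMem_subset (hU x hx) hj)
    exact (vanishes hv).trans (vanishes hw).symm

lemma submatrix_mulVec_comp_of_support_subset {R l m ι κ : Type*} [NonUnitalNonAssocSemiring R]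
    [Fintype m] [Fintype ι] (A : Matrix l m R) (r : κ → l) {e : ι → m}
    (he : Function.Injective e) {v : m → R} (hv : Function.support v ⊆ Set.range e) :
    A.submatrix r e *ᵥ (v ∘ e) = (A *ᵥ v) ∘ r := by
  ext a
  refine Fintype.sum_of_injective e he _ _ (fun j hj => ?_) fun _ => rfl
  rw [Function.notMem_support.1 (Set.notMem_subset hv hj), mul_zero]

lemma support_subset_range_castLE {M : Type*} [Zero M] {n i : ℕ} (hin : i ≤ n) {v : Fin n → M}
    (hv : ∀ j : Fin n, i ≤ (j : ℕ) → v j = 0) :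
    Function.support v ⊆ Set.range (Fin.castLE hin) := by
  intro j hj
  rw [Fin.range_castLE]
  exact lt_of_not_ge fun hij => hj (hv j hij)

theorem stable_rank_le_of_invariant_subspace_general {k m ι : Type*} [Field k] [Fintype m]
    [DecidableEq m] [Fintype ι] [DecidableEq ι] (X : Matrix m m k) {e : ι → m}
    (he : Function.Injective e) (U : Submodule k (m → k)) (hUinv : ∀ v ∈ U, X *ᵥ v ∈ U)
    (hUnil : ∀ v ∈ U, ∃ N, (X ^ N) *ᵥ v = 0)
    (hUsupp : ∀ v ∈ U, Function.support v ⊆ Set.range e) :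
    (X.submatrix e e ^ Fintype.card ι).rank + finrank k U ≤ Fintype.card ι := by
  let Y := X.submatrix e e
  let f : End k U := (toLin' X).restrict hUinv
  let s : U →ₗ[k] ι → k := (LinearMap.funLeft k k e).domRestrict U
  have intertwines : toLin' Y ∘ₗ s = s ∘ₗ f :=
    LinearMap.ext fun v => submatrix_mulVec_comp_of_support_subset X e he (hUsupp v v.2)
  have nilpotent : ∀ v, ∃ N, (f ^ N) v = 0 := by
    rintro ⟨v, hv⟩
    obtain ⟨N, hN⟩ := hUnil v hv
    refine ⟨N, Subtype.ext ?_⟩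
    calc ((f ^ N) ⟨v, hv⟩ : m → k) = (toLin' X ^ N) v := by
          rw [End.pow_restrict N (h := hUinv), LinearMap.coe_restrict_apply]
      _ = 0 := by rw [← toLin'_pow, toLin'_apply, hN]
  have bound := finrank_range_pow_finrank_add_finrank_le intertwines
    (injective_domRestrict_funLeft hUsupp) nilpotent
  rwa [finrank_fintype_fun_eq_card, ← toLin'_pow] at bound

/-- If `X` is a nilpotent `n × n` matrix, `1 ≤ i ≤ n`, and `U` is an `X`-invariant subspace of
`k^n` of dimension `u` contained in the coordinate subspace spanned by the first `i` standard
basis vectors, then `rank ((X_{≤i,≤i}) ^ i) ≤ i - u`. -/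
theorem stable_rank_le_of_invariant_subspace {k : Type*} [Field k] (n : ℕ)
    (X : Matrix (Fin n) (Fin n) k) (hnil : IsNilpotent X)
    (i : ℕ) (hi1 : 1 ≤ i) (hin : i ≤ n)
    (U : Submodule k (Fin n → k))
    (hUinv : ∀ v ∈ U, X.mulVec v ∈ U)
    (hUcoord : ∀ v ∈ U, ∀ j : Fin n, i ≤ (j : ℕ) → v j = 0)
    (u : ℕ) (hu : Module.finrank k U = u) :
    ((X.submatrix (Fin.castLE hin) (Fin.castLE hin)) ^ i).rank ≤ i - u := by
  obtain ⟨N, hN⟩ := hnil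
  exact Nat.le_sub_of_add_le <| by
    simpa [hu] using stable_rank_le_of_invariant_subspace_general X (Fin.castLE_injective hin) U
      hUinv (fun v _ => ⟨N, by rw [hN, zero_mulVec]⟩)
      fun v hv => support_subset_range_castLE hin (hUcoord v hv)
end

section
/- Let k be a field, let i ≥ 2, and let h ∈ {1,…,i−1}. Then there exists a regular nilpotent i×i matrix X over k (i.e. X nilpotent with X^{i−1} ≠ 0) such that the leading principal submatrix X_{≤h,≤h} is invertible. -/
/-!
The matrix `J` with ones on the superdiagonal is regular nilpotent, and so is every conjugate of it.
The leading `h × h` corner of `J` falls short of the cyclic permutation matrix only by an entry `1`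
at `(h - 1, 0)`. Column `h` of `J`, outside the corner, has its single `1` in row `h - 1`, so
adding it to column `0` supplies the missing entry. Completing this column operation to a
conjugation requires subtracting row `0` from row `h`, and row `h` does not meet the corner.
-/

open Matrix

section RegularNilpotent

/-- A square matrix of size `card n` is regular nilpotent if it is nilpotent and its power of
exponent `card n - 1` does not vanish; over a field this means that it is similar to a single
nilpotent Jordan block. -/
structure IsRegularNilpotent {n R : Type*} [Fintype n] [DecidableEq n] [Semiring R]
    (X : Matrix n n R) : Prop where
  isNilpotent : IsNilpotent X
  pow_card_sub_one_ne_zero : X ^ (Fintype.card n - 1) ≠ 0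

theorem units_conj_pow_eq_zero_iff {M : Type*} [MonoidWithZero M] (u : Mˣ) (x : M) (m : ℕ) :
    (↑u⁻¹ * x * ↑u) ^ m = 0 ↔ x ^ m = 0 := by
  rw [Units.conj_pow', Units.mul_left_eq_zero, Units.mul_right_eq_zero]

theorem IsRegularNilpotent.units_conj {n R : Type*} [Fintype n] [DecidableEq n] [Semiring R]
    {X : Matrix n n R} (hX : IsRegularNilpotent X) (u : (Matrix n n R)ˣ) :
    IsRegularNilpotent (u⁻¹.val * X * u.val) where
  isNilpotent := hX.isNilpotent.imp fun m ↦ (units_conj_pow_eq_zero_iff u X m).mpr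
  pow_card_sub_one_ne_zero :=
    (units_conj_pow_eq_zero_iff u X _).not.mpr hX.pow_card_sub_one_ne_zero

end RegularNilpotent

section UpperShift

/-- The nilpotent Jordan block of size `i`, with ones on the superdiagonal: it sends the basis
vector `e_{b+1}` to `e_b`, and `e_0` to `0`. -/
def upperShift (R : Type*) [Zero R] [One R] (i : ℕ) : Matrix (Fin i) (Fin i) R :=
  .of fun a b ↦ if (b : ℕ) = a + 1 then 1 else 0

theorem upperShift_apply {R : Type*} [Zero R] [One R] {i : ℕ} (a b : Fin i) :
    upperShift R i a b = if (b : ℕ) = a + 1 then 1 else 0 := rfl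

variable {R : Type*} [Semiring R] {i : ℕ}

theorem upperShift_pow_apply (m : ℕ) (a b : Fin i) :
    (upperShift R i ^ m) a b = if (b : ℕ) = a + m then 1 else 0 := by
  induction m generalizing a with
  | zero => simp only [pow_zero, one_apply, Fin.ext_iff, add_zero, eq_comm]
  | succ m ih =>
    simp only [pow_succ', mul_apply, upperShift_apply, ih, ite_mul, one_mul, zero_mul]
    by_cases ha : (a : ℕ) + 1 < i
    · rw [Finset.sum_eq_single_of_mem ⟨a + 1, ha⟩ (Finset.mem_univ _)
        fun c _ hc ↦ if_neg fun hca ↦ hc (Fin.ext hca), if_pos rfl]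
      simp only [add_assoc, add_comm 1 m]
    · rw [if_neg (by lia)]
      exact Finset.sum_eq_zero fun c _ ↦ if_neg (by lia)

theorem upperShift_pow_self : upperShift R i ^ i = 0 := by
  ext a b
  rw [upperShift_pow_apply, if_neg (by lia), Matrix.zero_apply]

theorem isRegularNilpotent_upperShift [Nontrivial R] [NeZero i] :
    IsRegularNilpotent (upperShift R i) where
  isNilpotent := ⟨i, upperShift_pow_self⟩
  pow_card_sub_one_ne_zero hzero := by
    have top_right_entry := congrFun₂ hzero 0 (Fin.rev 0)
    simp [upperShift_pow_apply, Fin.val_rev] at top_right_entry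

end UpperShift

section Corner

theorem isUnit_permMatrix {n R : Type*} [Fintype n] [DecidableEq n] [Semiring R]
    (σ : Equiv.Perm n) : IsUnit (σ.permMatrix R) :=
  inv_inv σ ▸ (Group.isUnit σ⁻¹).map (permMatrixHom (n := n) (R := R))

theorem val_finRotate {h : ℕ} (a : Fin h) :
    (finRotate h a : ℕ) = if (a : ℕ) + 1 = h then 0 else (a : ℕ) + 1 := by
  cases h with
  | zero => exact a.elim0
  | succ m => simp only [coe_finRotate, Fin.ext_iff, Fin.val_last, Nat.add_right_cancel_iff]

variable {R : Type*} [CommRing R]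

theorem submatrix_transvection_mul_of_forall_ne {l m n o : Type*} [Fintype n] [DecidableEq n]
    (p q : n) (c : R) (M : Matrix n m R) {f : l → n} (hf : ∀ a, f a ≠ p) (g : o → m) :
    (transvection p q c * M).submatrix f g = M.submatrix f g :=
  Matrix.ext fun a b ↦ transvection_mul_apply_of_ne p q (f a) (g b) (hf a) c M

theorem submatrix_upperShift_mul_transvection {i : ℕ} [NeZero i] (h : Fin i) :
    (upperShift R i * transvection h 0 1).submatrix
      (Fin.castLE h.is_lt.le) (Fin.castLE h.is_lt.le) = (finRotate h).permMatrix R := by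
  ext a b
  have hperm : (finRotate h).permMatrix R a b =
      if (b : ℕ) = if (a : ℕ) + 1 = h then 0 else (a : ℕ) + 1 then 1 else 0 := by
    simp only [Equiv.Perm.permMatrix, PEquiv.toMatrix_apply, Equiv.toPEquiv_apply,
      Option.mem_some_iff, Fin.ext_iff, val_finRotate, eq_comm]
  rw [submatrix_apply, hperm]
  by_cases hb : Fin.castLE h.is_lt.le b = 0
  · have hb0 : (b : ℕ) = 0 := congrArg Fin.val hb
    rw [hb, mul_transvection_apply_same]
    simp only [upperShift_apply, Fin.val_castLE, Fin.val_zero, hb0]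
    grind
  · have hb0 : (b : ℕ) ≠ 0 := fun hb0 ↦ hb (Fin.ext hb0)
    rw [mul_transvection_apply_of_ne _ _ _ _ hb, upperShift_apply]
    refine if_congr ?_ rfl rfl
    grind [Fin.val_castLE]

theorem submatrix_transvection_conj_upperShift {i : ℕ} [NeZero i] (h : Fin i) :
    (transvection h 0 (-1) * upperShift R i * transvection h 0 1).submatrix
      (Fin.castLE h.is_lt.le) (Fin.castLE h.is_lt.le) = (finRotate h).permMatrix R := by
  rw [Matrix.mul_assoc, submatrix_transvection_mul_of_forall_ne,
    submatrix_upperShift_mul_transvection]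
  exact fun a ↦ Fin.ne_of_lt a.is_lt

end Corner

theorem exists_regular_nilpotent_with_invertible_corner_general {R : Type*} [CommRing R]
    [Nontrivial R] {i h : ℕ} (hh1 : 1 ≤ h) (hh2 : h < i) :
    ∃ X : Matrix (Fin i) (Fin i) R, IsRegularNilpotent X ∧
      IsUnit (X.submatrix (Fin.castLE hh2.le) (Fin.castLE hh2.le)) := by
  have : NeZero i := ⟨by lia⟩
  let c : Fin i := ⟨h, hh2⟩
  have hc : c ≠ 0 := Fin.ne_of_val_ne (Nat.ne_of_gt hh1)
  let T : GL (Fin i) R := (SpecialLinearGroup.transvection hc 1).toGL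
  have hT : T⁻¹.val = transvection c 0 (-1) :=
    congrArg Subtype.val (SpecialLinearGroup.transvection_inv hc (1 : R))
  refine ⟨T⁻¹.val * upperShift R i * T.val, isRegularNilpotent_upperShift.units_conj T, ?_⟩
  rw [hT]
  exact (submatrix_transvection_conj_upperShift (R := R) c).symm ▸ isUnit_permMatrix (finRotate h)

/-- For any field `k`, any `i ≥ 2` and any `h ∈ {1, …, i-1}`, there exists a regular nilpotent
`i × i` matrix `X` over `k` (i.e. `X` nilpotent with `X ^ (i-1) ≠ 0`) such that the leading
principal `h × h` submatrix `X_{≤h,≤h}` is invertible. -/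
theorem exists_regular_nilpotent_with_invertible_corner {k : Type*} [Field k]
    (i : ℕ) (hi : 2 ≤ i) (h : ℕ) (hh1 : 1 ≤ h) (hh2 : h < i) :
    ∃ X : Matrix (Fin i) (Fin i) k, IsNilpotent X ∧ X ^ (i - 1) ≠ 0 ∧
      IsUnit (X.submatrix (Fin.castLE hh2.le) (Fin.castLE hh2.le)) := by
  obtain ⟨X, hX, hcorner⟩ :=
    exists_regular_nilpotent_with_invertible_corner_general (R := k) hh1 hh2
  exact ⟨X, hX.isNilpotent, by simpa using hX.pow_card_sub_one_ne_zero, hcorner⟩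
end

section
/- Let k be a field, let λ be a partition of n, and let 1 ≤ i ≤ n−1. Then there exists a nilpotent n×n matrix X over k of Jordan type λ such that the stable rank of X_{≤i,≤i} equals d_{λ,i}, i.e. rank((X_{≤i,≤i})^i) = d_{λ,i}. -/
/-!
Let `N` be the nilpotent shift on the space `V` with basis `e (j, t)`, `t < l j`, so that `N` has
Jordan type `l`. An `i × i` leading block of a matrix of `N` is the same thing as a compression
`B ∘ N ∘ A`, where `A : W → V`, `B : V → W`, `B ∘ A = id` and `dim W = i`.

Given `a ≤ l` with `∑ j, a j = i`, let `W` have basis `e (j, t)`, `t < a j`, let `A` be the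
inclusion, and let `B` send `e (j, t)` to `e (j, t mod a j)` in the rows with `a j < l j`.
The compression permutes each of these rows cyclically and is the nilpotent shift on the other
rows, so its stable rank is the sum of the `a j` with `a j < l j`. With `r = n - i`, this sum is
`d_{λ,i}` if the parts from position `r` on are kept whole and the first `r` parts are shortened,
each nonempty one properly; there is room for that because `d_{λ,i} ≤ ∑_{j < r} (l j - 1)`.
-/

theorem exists_le_sum_eq {ι : Type*} (s : Finset ι) (f : ι → ℕ) {d : ℕ}
    (hd : d ≤ ∑ j ∈ s, f j) : ∃ g ≤ f, ∑ j ∈ s, g j = d := by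
  classical
  induction s using Finset.induction_on generalizing d with
  | empty => exact ⟨0, zero_le, by simpa [eq_comm] using hd⟩
  | insert b s hb ih =>
    rw [Finset.sum_insert hb] at hd
    obtain ⟨g, hg, hgd⟩ := ih (Nat.sub_le_iff_le_add'.mpr hd)
    refine ⟨Function.update g b (min d (f b)), ?_, ?_⟩
    · exact update_le_iff.mpr ⟨min_le_right _ _, fun j _ => hg j⟩
    · rw [Finset.sum_insert hb, Finset.sum_update_of_notMem hb, hgd, Function.update_self]
      omega

namespace IsPartition

variable {n i : ℕ} {l : ℕ → ℕ}

theorem sum_Ico_le (hl : IsPartition n l) (hin : i ≤ n) :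
    ∑ j ∈ Finset.Ico (n - i) n, l j ≤ i := by
  obtain ⟨hanti, -, hsum⟩ := hl
  rcases Nat.eq_zero_or_pos (l (n - i)) with hzero | hpos
  · rw [Finset.sum_eq_zero fun j hj =>
      Nat.eq_zero_of_le_zero (hzero ▸ hanti (Finset.mem_Ico.mp hj).1)]
    exact Nat.zero_le i
  · have hhead : (Finset.range (n - i)).card • 1 ≤ ∑ j ∈ Finset.range (n - i), l j :=
      Finset.card_nsmul_le_sum _ _ _ fun j hj =>
        hpos.trans_le (hanti (Finset.mem_range.mp hj).le)
    rw [Finset.card_range, smul_eq_mul, mul_one] at hhead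
    have hsplit := Finset.sum_range_add_sum_Ico l (Nat.sub_le n i)
    omega

theorem dPart_add_sum_Ico (hl : IsPartition n l) (hin : i ≤ n) :
    dPart n l i + ∑ j ∈ Finset.Ico (n - i) n, l j = i :=
  Nat.sub_add_cancel (hl.sum_Ico_le hin)

theorem dPart_le_sum_pred (hl : IsPartition n l) (hin : i ≤ n) :
    dPart n l i ≤ ∑ j ∈ Finset.range (n - i), (l j - 1) := by
  have htail := hl.dPart_add_sum_Ico hin
  have hsplit := Finset.sum_range_add_sum_Ico l (Nat.sub_le n i)
  have hpred : ∑ j ∈ Finset.range (n - i), l j ≤ ∑ j ∈ Finset.range (n - i), ((l j - 1) + 1) :=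
    Finset.sum_le_sum fun j _ => le_tsub_add
  rw [Finset.sum_add_distrib, Finset.sum_const, Finset.card_range, smul_eq_mul, mul_one] at hpred
  have hsum := hl.2.2
  omega

theorem exists_le_sum_eq_and_sum_ite_lt_eq_dPart (hl : IsPartition n l) (hin : i ≤ n) :
    ∃ a ≤ l, ∑ j ∈ Finset.range n, a j = i ∧
      ∑ j ∈ Finset.range n, (if a j < l j then a j else 0) = dPart n l i := by
  obtain ⟨g, hg, hgsum⟩ := exists_le_sum_eq _ _ (hl.dPart_le_sum_pred hin)
  let a j := if j < n - i then g j else l j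
  have ha_head {j : ℕ} (hj : j ∈ Finset.range (n - i)) : a j = g j :=
    if_pos (Finset.mem_range.mp hj)
  have ha_tail {j : ℕ} (hj : j ∈ Finset.Ico (n - i) n) : a j = l j :=
    if_neg (Finset.mem_Ico.mp hj).1.not_gt
  have hg_lt (j : ℕ) (hj : ¬g j < l j) : g j = 0 := by
    have : g j ≤ l j - 1 := hg j
    omega
  refine ⟨a, fun j => ?_, ?_, ?_⟩
  · simp only [a]
    split_ifs
    exacts [(hg j).trans (Nat.sub_le _ _), le_rfl]
  · rw [← Finset.sum_range_add_sum_Ico _ (Nat.sub_le n i), Finset.sum_congr rfl fun _ => ha_head,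
      Finset.sum_congr rfl fun _ => ha_tail, hgsum, hl.dPart_add_sum_Ico hin]
  · rw [← Finset.sum_range_add_sum_Ico _ (Nat.sub_le n i), ← hgsum,
      Finset.sum_eq_zero (s := Finset.Ico _ _) fun j hj => if_neg (ha_tail hj).not_lt, add_zero]
    refine Finset.sum_congr rfl fun j hj => ?_
    rw [ha_head hj, ite_eq_left_iff]
    exact fun h => (hg_lt j h).symm

end IsPartition

theorem matrix_rank_eq_zero_iff {k m n : Type*} [Field k] [Finite m] [Fintype n]
    {X : Matrix m n k} : X.rank = 0 ↔ X = 0 := by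
  classical
  rw [Matrix.rank, Submodule.finrank_eq_zero, LinearMap.range_eq_bot, ← Matrix.toLin'_apply',
    map_eq_zero_iff _ Matrix.toLin'.injective]

theorem HasJordanType.isNilpotent {k : Type*} [Field k] {n : ℕ} {X : Matrix (Fin n) (Fin n) k}
    {l : ℕ → ℕ} (hX : HasJordanType X l) : IsNilpotent X :=
  ⟨∑ j ∈ Finset.range n, l j, matrix_rank_eq_zero_iff.mp <| (hX _).trans <|
    Finset.sum_eq_zero fun _ hj => Nat.sub_eq_zero_of_le <|
      Finset.single_le_sum (f := l) (fun _ _ => Nat.zero_le _) hj⟩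

/-- The splitting `V ≃ W × ker B` given by a map `A` and a retraction `B` of it. -/
def prodKerEquivOfLeftInverse {R V W : Type*} [Ring R] [AddCommGroup V] [Module R V]
    [AddCommGroup W] [Module R W] (A : W →ₗ[R] V) (B : V →ₗ[R] W)
    (hBA : B ∘ₗ A = LinearMap.id) : (W × LinearMap.ker B) ≃ₗ[R] V :=
  have hB (w : W) : B (A w) = w := LinearMap.congr_fun hBA w
  .ofLinearMap (A.coprod (LinearMap.ker B).subtype)
    (B.prod <| (LinearMap.id - A ∘ₗ B).codRestrict (LinearMap.ker B) fun v => by simp [hB])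
    (by ext v; simp) (by ext w <;> simp [hB])

theorem exists_basis_toMatrix_submatrix_eq {k V W : Type*} [Field k] [AddCommGroup V] [Module k V]
    [FiniteDimensional k V] [AddCommGroup W] [Module k W] {A : W →ₗ[k] V} {B : V →ₗ[k] W}
    (hBA : B ∘ₗ A = LinearMap.id) {n i : ℕ} (hin : i ≤ n) (hV : Module.finrank k V = n)
    (g : Module.Basis (Fin i) k W) :
    ∃ b : Module.Basis (Fin n) k V, ∀ f : Module.End k V,
      (LinearMap.toMatrix b b f).submatrix (Fin.castLE hin) (Fin.castLE hin) =
        LinearMap.toMatrix g g (B ∘ₗ f ∘ₗ A) := by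
  let E := prodKerEquivOfLeftInverse A B hBA
  have : Module.Finite k W := .of_basis g
  have hker : Module.finrank k (LinearMap.ker B) = n - i := by
    have hE := E.finrank_eq
    rw [Module.finrank_prod, Module.finrank_eq_card_basis g, Fintype.card_fin] at hE
    omega
  let c := Module.finBasisOfFinrankEq k _ hker
  let e : Fin i ⊕ Fin (n - i) ≃ Fin n := finSumFinEquiv.trans (finCongr (by omega))
  have he (p : Fin i) : Fin.castLE hin p = e (.inl p) := by ext; simp [e]
  refine ⟨((g.prod c).map E).reindex e, fun f => ?_⟩
  ext p q
  simp [LinearMap.toMatrix_apply, he, E, prodKerEquivOfLeftInverse]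

theorem rank_toMatrix_pow {R V ι : Type*} [CommRing R] [AddCommGroup V] [Module R V] [Fintype ι]
    [DecidableEq ι] (b : Module.Basis ι R V) (f : Module.End R V) (m : ℕ) :
    (LinearMap.toMatrix b b f ^ m).rank = Module.finrank R (LinearMap.range (f ^ m)) := by
  rw [LinearMap.toMatrix_pow, Matrix.rank_eq_finrank_range_toLin _ b b, Matrix.toLin_toMatrix]

/-- The positions `(j, t)`, `t < a j`, of a diagram with a row of length `a j` for each `j`; the
basis vectors of a direct sum of Jordan blocks of sizes `a j` are indexed by it. -/
abbrev RowIndex {ι : Type*} (a : ι → ℕ) : Type _ := Σ j, Fin (a j)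

section RowShift

variable (R : Type*) [Semiring R] {ι : Type*} (a : ι → ℕ) (c : ι → Prop) [DecidablePred c]

/-- The `t`-th term of the sequence running through the basis vectors of row `j`, which at the end
of the row starts over if `c j` holds and stays `0` otherwise. It vanishes on an empty row in both
cases, since `t % 0 = t`. -/
noncomputable def rowVec (j : ι) (t : ℕ) : RowIndex a →₀ R :=
  let u := if c j then t % a j else t
  if hu : u < a j then Finsupp.single ⟨j, ⟨u, hu⟩⟩ 1 else 0

/-- The endomorphism moving every position to the next one in its row, with the last position of
row `j` sent to the first one if `c j` holds and killed otherwise. -/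
noncomputable def rowShift : Module.End R (RowIndex a →₀ R) :=
  Finsupp.linearCombination R fun s => rowVec R a c s.1 (s.2 + 1)

variable {R a c}

theorem rowVec_of_lt {j : ι} {t : ℕ} (ht : t < a j) :
    rowVec R a c j t = Finsupp.single ⟨j, t, ht⟩ 1 := by
  simp [rowVec, Nat.mod_eq_of_lt, ht]

theorem rowVec_of_le {j : ι} {t : ℕ} (hj : ¬c j) (ht : a j ≤ t) : rowVec R a c j t = 0 := by
  simp [rowVec, hj, ht]

theorem rowVec_mod {j : ι} (hj : c j) (t : ℕ) :
    rowVec R a c j (t % a j) = rowVec R a c j t := by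
  simp only [rowVec, if_pos hj, Nat.mod_mod]

theorem rowVec_mem_supported (j : ι) {m t : ℕ} (hmt : m ≤ t) :
    rowVec R a c j t ∈ Finsupp.supported R R {s : RowIndex a | c s.1 ∨ m ≤ s.2} := by
  by_cases hj : c j
  · simp only [rowVec, if_pos hj]
    split
    · exact Finsupp.single_mem_supported R _ (Or.inl hj)
    · exact zero_mem _
  · rcases lt_or_ge t (a j) with ht | ht
    · rw [rowVec_of_lt ht]
      exact Finsupp.single_mem_supported R _ (Or.inr hmt)
    · rw [rowVec_of_le hj ht]
      exact zero_mem _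

theorem rowShift_single (s : RowIndex a) :
    rowShift R a c (Finsupp.single s 1) = rowVec R a c s.1 (s.2 + 1) := by
  simp [rowShift]

theorem rowShift_rowVec (j : ι) (t : ℕ) :
    rowShift R a c (rowVec R a c j t) = rowVec R a c j (t + 1) := by
  have hlt {u : ℕ} (hu : u < a j) :
      rowShift R a c (rowVec R a c j u) = rowVec R a c j (u + 1) := by
    rw [rowVec_of_lt hu, rowShift_single]
  by_cases hj : c j
  · rcases Nat.eq_zero_or_pos (a j) with hzero | hpos
    · simp [rowVec, hzero]
    · rw [← rowVec_mod hj, hlt (Nat.mod_lt t hpos), ← rowVec_mod hj, Nat.mod_add_mod, rowVec_mod hj]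
  · rcases lt_or_ge t (a j) with ht | ht
    · exact hlt ht
    · rw [rowVec_of_le hj ht, map_zero, rowVec_of_le hj (ht.trans t.le_succ)]

theorem rowShift_pow_rowVec (m : ℕ) (j : ι) (t : ℕ) :
    (rowShift R a c ^ m) (rowVec R a c j t) = rowVec R a c j (t + m) := by
  induction m with
  | zero => simp
  | succ m ih => rw [pow_succ', Module.End.mul_apply, ih, rowShift_rowVec, add_assoc]

theorem exists_rowVec_add_eq_single {m : ℕ} (s : RowIndex a) (hs : c s.1 ∨ m ≤ s.2) :
    ∃ t, rowVec R a c s.1 (t + m) = Finsupp.single s 1 := by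
  rcases hs with hs | hs
  · have hm : m ≤ a s.1 * m := Nat.le_mul_of_pos_left m (Fin.pos s.2)
    refine ⟨s.2 + (a s.1 * m - m), ?_⟩
    rw [add_assoc, Nat.sub_add_cancel hm, ← rowVec_mod hs, Nat.add_mul_mod_self_left,
      rowVec_mod hs, rowVec_of_lt s.2.2]
  · exact ⟨s.2 - m, by rw [Nat.sub_add_cancel hs, rowVec_of_lt s.2.2]⟩

theorem range_rowShift_pow (m : ℕ) :
    LinearMap.range (rowShift R a c ^ m) =
      Finsupp.supported R R {s : RowIndex a | c s.1 ∨ m ≤ s.2} := by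
  apply le_antisymm
  · rw [LinearMap.range_eq_map, ← Finsupp.supported_univ, Finsupp.supported_eq_span_single,
      Submodule.map_span_le]
    rintro _ ⟨s, -, rfl⟩
    beta_reduce
    rw [← rowVec_of_lt (c := c) s.2.2, rowShift_pow_rowVec]
    exact rowVec_mem_supported _ (Nat.le_add_left _ _)
  · rw [Finsupp.supported_eq_span_single, Submodule.span_le]
    rintro _ ⟨s, hs, rfl⟩
    obtain ⟨t, ht⟩ := exists_rowVec_add_eq_single (R := R) s hs
    exact ⟨rowVec R a c s.1 t, (rowShift_pow_rowVec m _ t).trans ht⟩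

theorem finrank_range_rowShift_pow [StrongRankCondition R] [Fintype ι] (m : ℕ) :
    Module.finrank R (LinearMap.range (rowShift R a c ^ m)) =
      ∑ j, if c j then a j else a j - m := by
  have hrow (j : ι) :
      (∑ t : Fin (a j), if c j ∨ m ≤ t then 1 else 0) = if c j then a j else a j - m := by
    rw [Fin.sum_univ_eq_sum_range (fun t => if c j ∨ m ≤ t then 1 else 0), ← Finset.card_filter,
      Finset.range_eq_Ico]
    by_cases hj : c j <;> simp [hj, Finset.Ico_filter_le]
  rw [range_rowShift_pow, (Finsupp.supportedEquivFinsupp _).finrank_eq, Module.finrank_finsupp_self,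
    Fintype.card_subtype, Finset.card_filter, Fintype.sum_sigma]
  exact Finset.sum_congr rfl fun j _ => hrow j

end RowShift

section Truncation

variable (R : Type*) [Semiring R] {ι : Type*} {a l : ι → ℕ}

/-- The inclusion of the rows of lengths `a j` as initial segments of rows of lengths `l j`. -/
noncomputable def rowIncl (hal : a ≤ l) : (RowIndex a →₀ R) →ₗ[R] (RowIndex l →₀ R) :=
  Finsupp.lmapDomain R R (Sigma.map id fun j => Fin.castLE (hal j))

/-- The retraction of the rows of lengths `l j` onto their initial segments of lengths `a j` which
winds every row that is properly truncated around its initial segment. -/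
noncomputable def rowRetract (a l : ι → ℕ) : (RowIndex l →₀ R) →ₗ[R] (RowIndex a →₀ R) :=
  Finsupp.linearCombination R fun s => rowVec R a (fun j => a j < l j) s.1 s.2

variable {R}

theorem rowIncl_single (hal : a ≤ l) (s : RowIndex a) :
    rowIncl R hal (Finsupp.single s 1) = Finsupp.single ⟨s.1, s.2.castLE (hal s.1)⟩ 1 := by
  simp [rowIncl, Sigma.map]

theorem rowRetract_single (s : RowIndex l) :
    rowRetract R a l (Finsupp.single s 1) = rowVec R a (fun j => a j < l j) s.1 s.2 := by
  simp [rowRetract]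

theorem rowRetract_comp_rowIncl (hal : a ≤ l) :
    rowRetract R a l ∘ₗ rowIncl R hal = LinearMap.id := by
  refine Finsupp.lhom_ext' fun s => LinearMap.ext_ring ?_
  simp only [LinearMap.comp_apply, Finsupp.lsingle_apply, LinearMap.id_apply]
  rw [rowIncl_single, rowRetract_single, Fin.val_castLE, rowVec_of_lt s.2.2]

theorem rowRetract_comp_rowShift_comp_rowIncl (hal : a ≤ l) :
    rowRetract R a l ∘ₗ rowShift R l (fun _ => False) ∘ₗ rowIncl R hal =
      rowShift R a fun j => a j < l j := by
  refine Finsupp.lhom_ext' fun ⟨j, t⟩ => LinearMap.ext_ring ?_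
  simp only [LinearMap.comp_apply, Finsupp.lsingle_apply]
  rw [rowIncl_single, rowShift_single, rowShift_single, Fin.val_castLE]
  rcases lt_or_ge (t + 1 : ℕ) (l j) with ht | ht
  · rw [rowVec_of_lt ht, rowRetract_single]
  · have hj : ¬a j < l j := by omega
    rw [rowVec_of_le not_false ht, map_zero,
      rowVec_of_le (c := fun j => a j < l j) hj ((hal j).trans ht)]

end Truncation

theorem exists_rank_pow_eq_and_rank_submatrix_pow_eq (k : Type*) [Field k] {ι : Type*} [Fintype ι]
    {a l : ι → ℕ} (hal : a ≤ l) {n i : ℕ} (hl : ∑ j, l j = n) (ha : ∑ j, a j = i) (hin : i ≤ n) :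
    ∃ X : Matrix (Fin n) (Fin n) k, (∀ m, (X ^ m).rank = ∑ j, (l j - m)) ∧
      ∀ m, ((X.submatrix (Fin.castLE hin) (Fin.castLE hin)) ^ m).rank =
        ∑ j, if a j < l j then a j else a j - m := by
  have finrank_rows (b : ι → ℕ) : Module.finrank k (RowIndex b →₀ k) = ∑ j, b j := by simp
  let g := Module.finBasisOfFinrankEq k (RowIndex a →₀ k) ((finrank_rows a).trans ha)
  obtain ⟨b, hb⟩ := exists_basis_toMatrix_submatrix_eq (rowRetract_comp_rowIncl hal) hin
    ((finrank_rows l).trans hl) g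
  refine ⟨LinearMap.toMatrix b b (rowShift k l fun _ => False), fun m => ?_, fun m => ?_⟩
  · rw [rank_toMatrix_pow, finrank_range_rowShift_pow]
    simp only [if_false]
  · rw [hb, rowRetract_comp_rowShift_comp_rowIncl, rank_toMatrix_pow, finrank_range_rowShift_pow]

/-- For any partition `λ` of `n` and any `1 ≤ i ≤ n - 1` there exists a nilpotent `n × n`
matrix `X` of Jordan type `λ` such that the stable rank of `X_{≤i,≤i}` equals `d_{λ,i}`. -/
theorem exists_jordanType_with_stable_rank_eq_dPart {k : Type*} [Field k] (n : ℕ)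
    (l : ℕ → ℕ) (hl : IsPartition n l) (i : ℕ) (hi1 : 1 ≤ i) (hin : i < n) :
    ∃ X : Matrix (Fin n) (Fin n) k, IsNilpotent X ∧ HasJordanType X l ∧
      ((X.submatrix (Fin.castLE hin.le) (Fin.castLE hin.le)) ^ i).rank = dPart n l i := by
  obtain ⟨a, hal, hai, hd⟩ := hl.exists_le_sum_eq_and_sum_ite_lt_eq_dPart hin.le
  rw [Finset.sum_range] at hai hd
  have ha_le (j : Fin n) : a j ≤ i := hai ▸ Finset.single_le_sum (f := fun j : Fin n => a j)
    (fun _ _ => Nat.zero_le _) (Finset.mem_univ j)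
  obtain ⟨X, hX, hstable⟩ := exists_rank_pow_eq_and_rank_submatrix_pow_eq k
    (a := fun j : Fin n => a j) (l := fun j => l j) (fun j => hal j)
    ((Finset.sum_range l).symm.trans hl.2.2) hai hin.le
  have hjordan : HasJordanType X l := fun m => by rw [hX, Finset.sum_range]
  refine ⟨X, hjordan.isNilpotent, hjordan, ?_⟩
  simpa only [Nat.sub_eq_zero_of_le (ha_le _), hd] using hstable i
end

section
/- Let ν = (ν_1,…,ν_s) be a composition of n, let λ be the conjugate (transpose) partition of the weakly decreasing rearrangement of ν, and let 1 ≤ i ≤ n−1. Then the number of r ∈ {1,…,i} such that r and r + (n−i) lie in different blocks of ν equals d_{λ,i} = i − Σ_{j=n−i+1}^{n} λ_j. (This number is the number of nonzero positions on the (n−i)-th upper codiagonal of the block strictly upper triangular matrices determined by ν.) -/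
/-- Positions `0, …, n-1` are grouped into consecutive blocks of sizes `ν 0, …, ν (s-1)`.
`SameBlock ν s r c` means positions `r` and `c` lie in the same block. -/
def SameBlock (ν : ℕ → ℕ) (s : ℕ) (r c : ℕ) : Prop :=
  ∃ t < s, (∑ u ∈ Finset.range t, ν u) ≤ r ∧ r < (∑ u ∈ Finset.range (t + 1), ν u) ∧
    (∑ u ∈ Finset.range t, ν u) ≤ c ∧ c < (∑ u ∈ Finset.range (t + 1), ν u)

/-- The conjugate (transpose) partition of the weakly decreasing rearrangement of the
composition `(ν 0, …, ν (s-1))`: its `0`-indexed `j`-th part is `#{t < s | ν t ≥ j + 1}`. -/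
def conjOf (ν : ℕ → ℕ) (s : ℕ) : ℕ → ℕ :=
  fun j => ((Finset.range s).filter (fun t => j + 1 ≤ ν t)).card

/-!
Put `k = n - i`. The positions `r` for which `r` and `r + k` both lie in block `t` are the block
without its last `k` elements, so there are `ν t - k` of them (truncated subtraction), and
`∑ t, (ν t - k)` in all. That is also the number of cells outside the first `k` columns of the
diagram with row lengths `ν t`; counted by columns, they give the tail sum of `λ` starting at its
`0`-indexed part `k`. The positions `r` above are all less than `i`, so it remains to take the
complement in `[0, i)`.
-/

section CodiagonalCount

open Finset

variable {ν : ℕ → ℕ} {s : ℕ}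

lemma sum_Ico_conjOf {n : ℕ} (hν : ∀ t < s, ν t ≤ n) (k : ℕ) :
    ∑ j ∈ Ico k n, conjOf ν s j = ∑ t ∈ range s, (ν t - k) :=
  calc
    ∑ j ∈ Ico k n, conjOf ν s j = ∑ t ∈ range s, #{j ∈ Ico k n | j + 1 ≤ ν t} :=
      sum_card_bipartiteAbove_eq_sum_card_bipartiteBelow fun j t => j + 1 ≤ ν t
    _ = ∑ t ∈ range s, (ν t - k) := by
      refine sum_congr rfl fun t ht => ?_
      have hrow : {j ∈ Ico k n | j + 1 ≤ ν t} = Ico k (ν t) := by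
        ext j
        have := hν t (mem_range.1 ht)
        simp only [mem_filter, mem_Ico]
        omega
      rw [hrow, Nat.card_Ico]

/-- The positions `r` such that `r` and `r + k` both lie in block `t`, as an interval. The truncated
subtraction makes it empty when the block has at most `k` elements. -/
def blockShiftInterval (ν : ℕ → ℕ) (k t : ℕ) : Finset ℕ :=
  Ico (∑ u ∈ range t, ν u) (∑ u ∈ range (t + 1), ν u - k)

lemma card_blockShiftInterval (ν : ℕ → ℕ) (k t : ℕ) : #(blockShiftInterval ν k t) = ν t - k := by
  rw [blockShiftInterval, Nat.card_Ico, sum_range_succ, Nat.sub_right_comm, Nat.add_sub_cancel_left]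

lemma pairwise_disjoint_blockShiftInterval (ν : ℕ → ℕ) (k : ℕ) :
    Pairwise (Function.onFun Disjoint (blockShiftInterval ν k)) := by
  have hmono : Monotone fun t => ∑ u ∈ range t, ν u :=
    fun _ _ h => sum_le_sum_of_subset (range_mono h)
  refine fun t t' hne => disjoint_coe.1 ((hmono.pairwise_disjoint_on_Ico_succ hne).mono ?_ ?_) <;>
  · rw [blockShiftInterval, coe_Ico]
    exact Set.Ico_subset_Ico_right (Nat.sub_le _ _)

lemma sameBlock_add_iff {k r : ℕ} :
    SameBlock ν s r (r + k) ↔ ∃ t < s, r ∈ blockShiftInterval ν k t := by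
  simp only [SameBlock, blockShiftInterval, mem_Ico]
  refine exists_congr fun t => and_congr_right fun _ => ?_
  omega

lemma ncard_setOf_sameBlock_add (ν : ℕ → ℕ) (s k : ℕ) :
    {r | SameBlock ν s r (r + k)}.ncard = ∑ t ∈ range s, (ν t - k) := by
  have hunion : {r | SameBlock ν s r (r + k)} = ↑((range s).biUnion (blockShiftInterval ν k)) := by
    ext r
    simp only [Set.mem_ofPred_eq, sameBlock_add_iff, mem_coe, mem_biUnion, mem_range]
  rw [hunion, Set.ncard_coe_finset,
    card_biUnion fun _ _ _ _ hne => pairwise_disjoint_blockShiftInterval ν k hne]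
  exact sum_congr rfl fun t _ => card_blockShiftInterval ν k t

lemma SameBlock.right_lt_sum {r c : ℕ} (h : SameBlock ν s r c) : c < ∑ t ∈ range s, ν t := by
  obtain ⟨t, ht, -, -, -, hc⟩ := h
  exact hc.trans_le (sum_le_sum_of_subset (range_mono ht))

end CodiagonalCount

/-- Let `ν` be a composition of `n` (positions `0, …, n-1` grouped into consecutive
blocks of sizes `ν 0, …, ν (s-1)`), `λ` the conjugate of its weakly decreasing rearrangement,
and `1 ≤ i ≤ n - 1`. The number of `r` among the first `i` positions such that `r` and
`r + (n - i)` lie in different blocks of `ν` (the number of nonzero positions on the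
`(n-i)`-th upper codiagonal of the block strictly upper triangular matrices determined
by `ν`) equals `d_{λ,i}`. -/
theorem card_codiagonal_eq_dPart (n s : ℕ) (ν : ℕ → ℕ) (hν : ∀ t < s, 0 < ν t)
    (hsum : ∑ t ∈ Finset.range s, ν t = n) (i : ℕ) (hi1 : 1 ≤ i) (hin : i < n) :
    {r : ℕ | r < i ∧ ¬ SameBlock ν s r (r + (n - i))}.ncard = dPart n (conjOf ν s) i := by
  have hle : ∀ t < s, ν t ≤ n := fun t ht =>
    hsum ▸ Finset.single_le_sum_of_canonicallyOrdered (Finset.mem_range.2 ht)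
  have hsub : {r | SameBlock ν s r (r + (n - i))} ⊆ Set.Iio i := fun r hr => by
    have := hr.right_lt_sum
    rw [Set.mem_Iio]
    omega
  calc
    {r : ℕ | r < i ∧ ¬ SameBlock ν s r (r + (n - i))}.ncard
      = (Set.Iio i).ncard - {r | SameBlock ν s r (r + (n - i))}.ncard :=
        Set.ncard_sdiff hsub ((Set.finite_Iio i).subset hsub)
    _ = i - ∑ t ∈ Finset.range s, (ν t - (n - i)) := by
        rw [Set.ncard_Iio_nat, ncard_setOf_sameBlock_add]
    _ = dPart n (conjOf ν s) i := by rw [dPart, sum_Ico_conjOf hle]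
end

section
/- Let k be a field, let X be a nilpotent endomorphism of a finite-dimensional k-vector space V with Jordan type λ, and let v be a nonzero vector in the kernel of X. Then the Jordan type of the endomorphism of V/kv induced by X is the weakly decreasing rearrangement of the sequence obtained from λ by decreasing exactly one nonzero part of λ by 1. -/
section LinearAlgebra

open Module

variable {k V : Type*} [DivisionRing k] [AddCommGroup V] [Module k V]

lemma finrank_map_add_finrank_inf_ker_s11 {W : Type*} [AddCommGroup W] [Module k W] (f : V →ₗ[k] W)
    (p : Submodule k V) [FiniteDimensional k p] :
    finrank k (p.map f) + finrank k (p ⊓ f.ker : Submodule k V) = finrank k p := by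
  have h := (f.domRestrict p).finrank_range_add_finrank_ker
  rwa [LinearMap.range_domRestrict, LinearMap.ker_domRestrict, ← Submodule.finrank_map_subtype_eq,
    Submodule.map_comap_subtype] at h

lemma finrank_map_mkQ_span_singleton_add_ite (p : Submodule k V) [FiniteDimensional k p] {v : V}
    (hv : v ≠ 0) [Decidable (v ∈ p)] :
    finrank k (p.map (k ∙ v).mkQ) + (if v ∈ p then 1 else 0) = finrank k p := by
  rw [← finrank_map_add_finrank_inf_ker_s11 (k ∙ v).mkQ p, Submodule.ker_mkQ]
  congr 1
  split_ifs with hvp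
  · rw [inf_eq_right.2 ((Submodule.span_singleton_le_iff_mem v p).2 hvp), finrank_span_singleton hv]
  · rw [(Submodule.disjoint_span_singleton_of_notMem hvp).eq_bot, finrank_bot]

lemma range_mapQ_pow {R M : Type*} [Ring R] [AddCommGroup M] [Module R M] (f : M →ₗ[R] M)
    (p : Submodule R M) (hp : p ≤ p.comap f) (m : ℕ) :
    (p.mapQ p f hp ^ m).range = (f ^ m).range.map p.mkQ := by
  rw [← Submodule.mapQ_pow, Submodule.range_mapQ]

lemma exists_mem_range_pow_iff_lt {R M : Type*} [Semiring R] [AddCommMonoid M] [Module R M]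
    {f : M →ₗ[R] M} {x : M} {N : ℕ} (hN : x ∉ (f ^ N).range) :
    ∃ d, ∀ m, x ∈ (f ^ m).range ↔ m < d := by
  classical
  have hex : ∃ m, x ∉ (f ^ m).range := ⟨N, hN⟩
  refine ⟨Nat.find hex, fun m => ⟨fun hm => ?_, fun hm => not_not.1 (Nat.find_min hex hm)⟩⟩
  by_contra! hle
  exact Nat.find_spec hex (f.iterateRange.monotone hle hm)

lemma finrank_range_pow_succ_add_finrank_inf_ker [FiniteDimensional k V] (f : V →ₗ[k] V)
    (m : ℕ) :
    finrank k (f ^ (m + 1)).range + finrank k ((f ^ m).range ⊓ f.ker : Submodule k V) =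
      finrank k (f ^ m).range := by
  rw [pow_succ', Module.End.mul_eq_comp, LinearMap.range_comp, finrank_map_add_finrank_inf_ker_s11]

lemma two_mul_finrank_range_pow_lt [FiniteDimensional k V] {f : V →ₗ[k] V} {v : V} {h : ℕ}
    (hker : v ∈ f.ker) (hmem : v ∈ (f ^ h).range) (hnotMem : v ∉ (f ^ (h + 1)).range) :
    2 * finrank k (f ^ (h + 1)).range <
      finrank k (f ^ h).range + finrank k (f ^ (h + 2)).range := by
  have hle : (f ^ (h + 1)).range ≤ (f ^ h).range := f.iterateRange.monotone h.le_succ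
  have hlt : (f ^ (h + 1)).range ⊓ f.ker < (f ^ h).range ⊓ f.ker :=
    (inf_le_inf_right _ hle).lt_of_ne
      fun heq => hnotMem (heq.ge (Submodule.mem_inf.2 ⟨hmem, hker⟩)).1
  have hdim := Submodule.finrank_lt_finrank_of_lt hlt
  have hrank := finrank_range_pow_succ_add_finrank_inf_ker f h
  have hrank_succ := finrank_range_pow_succ_add_finrank_inf_ker f (h + 1)
  rw [add_assoc, one_add_one_eq_two] at hrank_succ
  omega

end LinearAlgebra

section Sequences

open Finset

lemma sum_tsub_add_sum_tsub_add_two {ι : Type*} (s : Finset ι) (l : ι → ℕ) (h : ℕ) :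
    ∑ j ∈ s, (l j - h) + ∑ j ∈ s, (l j - (h + 2)) =
      2 * ∑ j ∈ s, (l j - (h + 1)) + #{j ∈ s | l j = h + 1} := by
  rw [card_filter, mul_sum, ← sum_add_distrib, ← sum_add_distrib]
  refine sum_congr rfl fun j _ => ?_
  split_ifs <;> omega

lemma sum_update_pred_tsub_add_ite {ι : Type*} [DecidableEq ι] {s : Finset ι} {i : ι} (hi : i ∈ s)
    (l : ι → ℕ) (m : ℕ) :
    ∑ j ∈ s, (Function.update l i (l i - 1) j - m) + (if m < l i then 1 else 0) =
      ∑ j ∈ s, (l j - m) := by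
  have hrest : ∑ j ∈ s.erase i, (Function.update l i (l i - 1) j - m) =
      ∑ j ∈ s.erase i, (l j - m) :=
    sum_congr rfl fun j hj => by rw [Function.update_of_ne (ne_of_mem_erase hj)]
  rw [← add_sum_erase s _ hi, ← add_sum_erase s _ hi, hrest, Function.update_self]
  split_ifs <;> omega

lemma antitone_update_pred {l : ℕ → ℕ} (hl : Antitone l) {i : ℕ} (hi : l (i + 1) < l i) :
    Antitone (Function.update l i (l i - 1)) := by
  refine antitone_nat_of_succ_le fun j => ?_
  have hj : l (j + 1) ≤ l j := hl j.le_succ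
  simp only [Function.update_apply]
  split_ifs with hsucc heq heq
  · omega
  · subst hsucc
    omega
  · subst heq
    omega
  · exact hj

lemma exists_eq_and_succ_lt {α : Type*} [PartialOrder α] {l : ℕ → α} (hl : Antitone l) {i j : ℕ}
    (hij : l i < l j) : ∃ a, l a = l j ∧ l (a + 1) < l j := by
  by_contra! hconst
  have heq (a : ℕ) (ha : j ≤ a) : l a = l j := by
    induction a, ha using Nat.le_induction with
    | base => rfl
    | succ a ha ih => exact (hl (ha.trans a.le_succ)).eq_of_not_lt (hconst a ih)
  exact hij.ne (heq i (hl.reflect_lt hij).le)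

end Sequences

namespace IsPartition

variable {n : ℕ} {l : ℕ → ℕ}

lemma apply_le (hl : IsPartition n l) (j : ℕ) : l j ≤ n := by
  obtain ⟨-, hzero, hsum⟩ := hl
  rcases lt_or_ge j n with hj | hj
  · exact (Finset.single_le_sum_of_canonicallyOrdered (Finset.mem_range.2 hj)).trans_eq hsum
  · exact (hzero j hj).trans_le n.zero_le

lemma lt_of_apply_pos (hl : IsPartition n l) {j : ℕ} (hj : 0 < l j) : j < n :=
  not_le.1 fun hnj => hj.ne' (hl.2.1 j hnj)

lemma of_sum_range_eq {N : ℕ} (hl : Antitone l) (hzero : ∀ j ≥ N, l j = 0)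
    (hsum : ∑ j ∈ Finset.range N, l j = n) : IsPartition n l := by
  have hzero' (j : ℕ) (hj : n ≤ j) : l j = 0 := by
    by_contra hne
    have hjN : j < N := not_le.1 fun hNj => hne (hzero j hNj)
    have hlt : j + 1 ≤ n := calc
      j + 1 = ∑ _i ∈ Finset.range (j + 1), 1 := by simp
      _ ≤ ∑ i ∈ Finset.range (j + 1), l i := Finset.sum_le_sum fun i hi =>
        (Nat.one_le_iff_ne_zero.2 hne).trans (hl (Finset.mem_range_succ_iff.1 hi))
      _ ≤ ∑ i ∈ Finset.range N, l i :=
        Finset.sum_le_sum_of_subset (Finset.range_subset_range.2 hjN)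
      _ = n := hsum
    omega
  refine ⟨hl, hzero', Eq.trans ?_ hsum⟩
  rcases le_total N n with hNn | hnN
  · exact Finset.eventually_constant_sum hzero hNn
  · exact (Finset.eventually_constant_sum hzero' hnN).symm

lemma update_pred (hl : IsPartition n l) {i : ℕ} (hi : l (i + 1) < l i) :
    IsPartition (n - 1) (Function.update l i (l i - 1)) := by
  have hpos : 0 < l i := Nat.zero_lt_of_lt hi
  have hin : i < n := hl.lt_of_apply_pos hpos
  obtain ⟨hanti, hzero, hsum⟩ := hl
  refine of_sum_range_eq (N := n) (antitone_update_pred hanti hi) (fun j hj => ?_) ?_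
  · rw [Function.update_of_ne (by omega), hzero j hj]
  · have hsum_update := sum_update_pred_tsub_add_ite (Finset.mem_range.2 hin) l 0
    simp only [tsub_zero, hsum, if_pos hpos] at hsum_update
    omega

lemma exists_eq_and_succ_lt_of_two_mul_sum_lt (hl : IsPartition n l) {h : ℕ}
    (hconvex : 2 * ∑ j ∈ Finset.range n, (l j - (h + 1)) <
      ∑ j ∈ Finset.range n, (l j - h) + ∑ j ∈ Finset.range n, (l j - (h + 2))) :
    ∃ i, l i = h + 1 ∧ l (i + 1) < h + 1 := by
  rw [sum_tsub_add_sum_tsub_add_two, Nat.lt_add_right_iff_pos, Finset.card_pos] at hconvex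
  obtain ⟨j, hj⟩ := hconvex
  have hlj : l j = h + 1 := (Finset.mem_filter.1 hj).2
  have hln : l n = 0 := hl.2.1 n le_rfl
  exact hlj ▸ exists_eq_and_succ_lt hl.1 (i := n) (j := j) (by omega)

end IsPartition

theorem jordanType_quotient_by_kernel_vector_general {k V : Type*} [DivisionRing k]
    [AddCommGroup V] [Module k V] [FiniteDimensional k V] {n : ℕ} {l : ℕ → ℕ}
    (hl : IsPartition n l) {X : V →ₗ[k] V}
    (hX : ∀ m, Module.finrank k (X ^ m).range = ∑ j ∈ Finset.range n, (l j - m))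
    {v : V} (hv : v ≠ 0) (hXv : X v = 0)
    (hinv : Submodule.span k {v} ≤ (Submodule.span k {v}).comap X) :
    ∃ i, 0 < l i ∧ IsPartition (n - 1) (Function.update l i (l i - 1)) ∧
      ∀ m, Module.finrank k ((Submodule.span k {v}).mapQ (Submodule.span k {v}) X hinv ^ m).range =
        ∑ j ∈ Finset.range n, (Function.update l i (l i - 1) j - m) := by
  classical
  have hrange : (X ^ n).range = ⊥ := by
    simp [← Submodule.finrank_eq_zero (R := k), hX, hl.apply_le]
  obtain ⟨d, hd⟩ := exists_mem_range_pow_iff_lt (f := X) (x := v) (N := n) (by simpa [hrange])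
  obtain ⟨h, rfl⟩ : ∃ h, d = h + 1 :=
    Nat.exists_eq_add_one.2 ((hd 0).1 (by simp [Module.End.one_eq_id]))
  have hconvex := two_mul_finrank_range_pow_lt hXv ((hd h).2 (by simp)) (by simp [hd])
  rw [hX, hX, hX] at hconvex
  obtain ⟨i, hli, hlt⟩ := hl.exists_eq_and_succ_lt_of_two_mul_sum_lt hconvex
  have hpos : 0 < l i := by omega
  have hin : i ∈ Finset.range n := Finset.mem_range.2 (hl.lt_of_apply_pos hpos)
  refine ⟨i, hpos, hl.update_pred (hli ▸ hlt), fun m => ?_⟩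
  have hrank := finrank_map_mkQ_span_singleton_add_ite (X ^ m).range hv
  rw [← range_mapQ_pow X _ hinv, hX, ← sum_update_pred_tsub_add_ite hin l m, hli] at hrank
  simpa [hd, hli] using hrank

/-- Let `X` be a nilpotent endomorphism of a finite-dimensional vector space `V` of Jordan
type `λ` (i.e. `rank (X ^ m) = ∑_j max (λ_j - m) 0` for all `m`), and let `v ≠ 0` with
`X v = 0`. Then the Jordan type of the endomorphism induced by `X` on `V / k v` is the
weakly decreasing rearrangement `μ` of the sequence obtained from `λ` by decreasing exactly
one nonzero part of `λ` by `1`. -/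
theorem jordanType_quotient_by_kernel_vector {k V : Type*} [Field k] [AddCommGroup V]
    [Module k V] [FiniteDimensional k V] (n : ℕ) (hn : Module.finrank k V = n)
    (l : ℕ → ℕ) (hl : IsPartition n l)
    (X : V →ₗ[k] V) (hnil : IsNilpotent X)
    (hX : ∀ m : ℕ, Module.finrank k (LinearMap.range (X ^ m)) =
      ∑ j ∈ Finset.range n, (l j - m))
    (v : V) (hv : v ≠ 0) (hXv : X v = 0)
    (hinv : Submodule.span k {v} ≤ (Submodule.span k {v}).comap X) :
    ∃ (j₀ : ℕ) (μ : ℕ → ℕ), 0 < l j₀ ∧ IsPartition (n - 1) μ ∧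
      (Finset.range n).val.map μ =
        (Finset.range n).val.map (Function.update l j₀ (l j₀ - 1)) ∧
      ∀ m : ℕ, Module.finrank k (LinearMap.range
          ((Submodule.mapQ (Submodule.span k {v}) (Submodule.span k {v}) X hinv) ^ m)) =
        ∑ j ∈ Finset.range n, (μ j - m) := by
  obtain ⟨i, hpos, hpart, hrank⟩ := jordanType_quotient_by_kernel_vector_general hl hX hv hXv hinv
  exact ⟨i, _, hpos, hpart, rfl, hrank⟩
end
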